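/- Let A be a countably infinite set and let Q be an enumeration of Σ_A^fin for which there exist a strictly increasing sequence i_1 < i_2 < ⋯ of positive integers and, for each n ≥ 1, pairwise distinct letters a_1^{(n)}, a_2^{(n)}, a_3^{(n)}, b^{(n)} ∈ A such that: (i) i_n > n and q_{i_n − n} = a_1^{(n)} a_2^{(n)} a_3^{(n)}; (ii) no word among q_1, …, q_{i_n} starts with a_2^{(n)}; (iii) b^{(n)} does not occur in any word among q_1, …, q_{i_n}. Then the Ott–Tomforde–Willis full shift (Σ_A, σ) with domain D = Σ_A ∖ {∅} does NOT have the Lipschitz shadowing property with respect to the OTW metric d_Q. -/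

import Mathlib

/-- The Ott–Tomforde–Willis full shift `Σ_A = A^ℕ ⊔ Σ_A^fin`: infinite words are
functions `ℕ → A`, finite words (including the empty word `[]`) are lists. -/
abbrev OTWFullShift (A : Type*) := (ℕ → A) ⊕ List A

/-- `u ⪯ x`: the finite word `u` is an initial segment of `x ∈ Σ_A`. -/
def OTWPre {A : Type*} (u : List A) : OTWFullShift A → Prop
  | Sum.inl f => ∀ i : Fin u.length, u.get i = f i
  | Sum.inr v => u <+: v

/-- The shift map on `Σ_A`: delete the first symbol (finite words of length `≤ 1`
are sent to the empty word). -/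
def otwShift {A : Type*} : OTWFullShift A → OTWFullShift A
  | Sum.inl f => Sum.inl fun n => f (n + 1)
  | Sum.inr v => Sum.inr v.tail

/-- The Deaconu–Renault domain `D = Σ_A ∖ {∅}`. -/
def otwDomain (A : Type*) : Set (OTWFullShift A) := {x | x ≠ Sum.inr []}

/-- `P` is an enumeration of `Σ_A^fin` indexed by `{1, 2, 3, …}`:
`j ↦ P j` is a bijection from `{1, 2, …}` onto the finite words
(the value `P 0` is irrelevant). -/
def IsEnumeration {A : Type*} (P : ℕ → List A) : Prop :=
  Function.Bijective fun k : ℕ => P (k + 1)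

open Classical in
/-- The OTW metric attached to the enumeration `P`:
`d_P(x,y) = 2^{-i}` where `i = min{j ≥ 1 : exactly one of P j ⪯ x, P j ⪯ y}`. -/
noncomputable def otwDist {A : Type*} (P : ℕ → List A) (x y : OTWFullShift A) : ℝ :=
  if x = y then 0
  else (1 / 2 : ℝ) ^ sInf {j : ℕ | 1 ≤ j ∧ Xor' (OTWPre (P j) x) (OTWPre (P j) y)}

/-- A `δ`-pseudo-orbit for the system `(Σ_A, σ, D)` with respect to `d`. -/
def IsDeltaPseudoOrbit {X : Type*} (d : X → X → ℝ) (σ : X → X) (D : Set X)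
    (δ : ℝ) (xs : ℕ → X) : Prop :=
  ∀ n : ℕ, xs n ∈ D ∧ d (σ (xs n)) (xs (n + 1)) < δ

/-- The shadowing property for the system `(X, σ, D)` with respect to `d`. -/
def HasShadowing {X : Type*} (d : X → X → ℝ) (σ : X → X) (D : Set X) : Prop :=
  ∀ ε > (0:ℝ), ∃ δ > (0:ℝ), ∀ xs : ℕ → X, IsDeltaPseudoOrbit d σ D δ xs →
    ∃ x : X, (∀ j : ℕ, σ^[j] x ∈ D) ∧ ∀ i : ℕ, d (σ^[i] x) (xs i) < ε

/-- The Lipschitz shadowing property for the system `(X, σ, D)` with respect to `d`. -/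
def HasLipschitzShadowing {X : Type*} (d : X → X → ℝ) (σ : X → X) (D : Set X) : Prop :=
  ∃ L > (0:ℝ), ∃ δ₀ > (0:ℝ), ∀ δ : ℝ, 0 < δ → δ ≤ δ₀ →
    ∀ xs : ℕ → X, IsDeltaPseudoOrbit d σ D δ xs →
      ∃ x : X, (∀ j : ℕ, σ^[j] x ∈ D) ∧ ∀ n : ℕ, d (σ^[n] x) (xs n) ≤ L * δ

/-!
Let `x = a₁a₂a₃a₃⋯`. In the pseudo-orbit `x, bx, x, σ x, σ² x, …` the only jump is from
`σ x = a₂a₃a₃⋯` to `bx`, and it is smaller than `2^{-i_n}` because no word among `q_1, …, q_{i_n}`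
starts with `a₂` or `b`. A point `z` whose orbit stays within less than `2^{-(i_n - n)}` of this
pseudo-orbit has both `z` and `σ² z` starting with `q_{i_n - n} = a₁a₂a₃`, so that the third letter
of `z` is both `a₃` and `a₁`. As `n` grows, the ratio `2^n` of the two radii beats every constant.
-/

section Shadowing

variable {X : Type*} {d : X → X → ℝ} {σ : X → X} {D : Set X}

theorem not_hasLipschitzShadowing_of_pow_gap {r : ℝ} (hr₀ : 0 < r) (hr₁ : r < 1)
    (h : ∀ n : ℕ, ∃ (m : ℕ) (xs : ℕ → X), IsDeltaPseudoOrbit d σ D (r ^ (m + n)) xs ∧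
      ∀ x, (∀ j, σ^[j] x ∈ D) → ∃ i, r ^ m ≤ d (σ^[i] x) (xs i)) :
    ¬ HasLipschitzShadowing d σ D := by
  rintro ⟨L, hL, δ₀, hδ₀, shadow⟩
  obtain ⟨n, hn⟩ := exists_pow_lt_of_lt_one (lt_min hδ₀ (inv_pos.2 hL)) hr₁
  obtain ⟨hnδ₀, hnL⟩ := lt_min_iff.1 hn
  obtain ⟨m, xs, hxs, far⟩ := h n
  have hδ : r ^ (m + n) ≤ δ₀ :=
    (pow_le_pow_of_le_one hr₀.le hr₁.le (Nat.le_add_left n m)).trans hnδ₀.le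
  obtain ⟨x, hxD, hx⟩ := shadow _ (pow_pos hr₀ _) hδ xs hxs
  obtain ⟨i, hi⟩ := far x hxD
  have gap : L * r ^ (m + n) < r ^ m := calc
    L * r ^ (m + n) = r ^ m * (L * r ^ n) := by ring
    _ < r ^ m * 1 :=
      mul_lt_mul_of_pos_left ((lt_inv_mul_iff₀ hL).1 (by rwa [mul_one])) (pow_pos hr₀ m)
    _ = r ^ m := mul_one _
  exact (hi.trans (hx i)).not_gt gap

/-- The sequence `x, y, σ y, σ² y, …`, an orbit of `σ` except for the jump from `σ x` to `y`. -/
def singleJumpOrbit (σ : X → X) (x y : X) : ℕ → X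
  | 0 => x
  | n + 1 => σ^[n] y

theorem isDeltaPseudoOrbit_singleJumpOrbit (hd : ∀ x, d x x = 0) {δ : ℝ} (hδ : 0 < δ) {x y : X}
    (hx : x ∈ D) (hy : ∀ n, σ^[n] y ∈ D) (hxy : d (σ x) y < δ) :
    IsDeltaPseudoOrbit d σ D δ (singleJumpOrbit σ x y)
  | 0 => ⟨hx, hxy⟩
  | n + 1 => ⟨hy n, by simpa only [singleJumpOrbit, Function.iterate_succ_apply', hd] using hδ⟩

end Shadowing

section Words

variable {A : Type*}

/-- The first letter of a point of `Σ_A`, which is `none` exactly for the empty word. -/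
def otwHead? : OTWFullShift A → Option A
  | Sum.inl f => some (f 0)
  | Sum.inr v => v.head?

/-- The infinite word `w a a a ⋯`, a point of `A^ℕ` with initial segment `w`. -/
def otwPadded (w : List A) (a : A) : OTWFullShift A :=
  Sum.inl fun i => w.getD i a

theorem otwPre_nil (x : OTWFullShift A) : OTWPre [] x := by
  cases x <;> simp [OTWPre]

theorem otwPre_cons_iff {c : A} {w : List A} {x : OTWFullShift A} :
    OTWPre (c :: w) x ↔ otwHead? x = some c ∧ OTWPre w (otwShift x) := by
  rcases x with f | _ | ⟨a, v⟩
  · simp [OTWPre, otwHead?, otwShift, Fin.forall_fin_succ, eq_comm (a := c)]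
  · simp [OTWPre, otwHead?]
  · simp [OTWPre, otwHead?, otwShift, List.cons_prefix_cons, eq_comm (a := c)]

theorem otwPre_iff_eq_nil_of_head?_ne {w : List A} {x : OTWFullShift A}
    (h : w.head? ≠ otwHead? x) : OTWPre w x ↔ w = [] := by
  cases w with
  | nil => simp only [otwPre_nil]
  | cons c w => simpa [otwPre_cons_iff] using fun hx => absurd hx.symm h

theorem otwPre_ofFn (f : ℕ → A) (n : ℕ) :
    OTWPre (List.ofFn fun i : Fin n => f i) (Sum.inl f) := by
  simp [OTWPre]

theorem otwPre_padded (w : List A) (a : A) : OTWPre w (otwPadded w a) := by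
  simp [OTWPre, otwPadded]

theorem otwShift_iterate_inl_mem_otwDomain (f : ℕ → A) (n : ℕ) :
    otwShift^[n] (Sum.inl f) ∈ otwDomain A := by
  induction n generalizing f with
  | zero => exact Sum.inl_ne_inr
  | succ _ ih => exact ih _

theorem exists_otwPre_inl_not_otwPre_inr (f : ℕ → A) (v : List A) :
    ∃ w, OTWPre w (Sum.inl f) ∧ ¬ OTWPre w (Sum.inr v) := by
  refine ⟨_, otwPre_ofFn f (v.length + 1), fun h => ?_⟩
  simpa using h.length_le

theorem eq_of_forall_otwPre_iff {x y : OTWFullShift A} (h : ∀ w, OTWPre w x ↔ OTWPre w y) :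
    x = y := by
  rcases x with f | v <;> rcases y with g | u
  · congr 1
    funext n
    simpa [-List.ofFn_succ] using (h _).1 (otwPre_ofFn f (n + 1)) ⟨n, by simp⟩
  · obtain ⟨w, hf, hu⟩ := exists_otwPre_inl_not_otwPre_inr f u
    exact absurd ((h w).1 hf) hu
  · obtain ⟨w, hg, hv⟩ := exists_otwPre_inl_not_otwPre_inr g v
    exact absurd ((h w).2 hg) hv
  · have hvu : v <+: u := (h v).1 List.prefix_rfl
    have huv : u <+: v := (h u).2 List.prefix_rfl
    rw [hvu.eq_of_length_le huv.length_le]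

theorem eq_of_otwPre_of_otwPre_shift_shift {a b c : A} {x : OTWFullShift A}
    (h₀ : OTWPre [a, b, c] x) (h₂ : OTWPre [a, b, c] (otwShift (otwShift x))) : a = c := by
  simp only [otwPre_cons_iff] at h₀ h₂
  exact Option.some.inj (h₂.1.symm.trans h₀.2.2.1)

end Words

section Metric

variable {A : Type*} {Q : ℕ → List A}

theorem otwDist_self (x : OTWFullShift A) : otwDist Q x x = 0 :=
  if_pos rfl

theorem otwDist_of_ne {x y : OTWFullShift A} (hxy : x ≠ y) :
    otwDist Q x y =
      (1 / 2) ^ sInf {j : ℕ | 1 ≤ j ∧ ¬ (OTWPre (Q j) x ↔ OTWPre (Q j) y)} := by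
  simp only [otwDist, if_neg hxy, ← xor_iff_not_iff]
  rfl

theorem otwDist_lt_half_pow_iff (hQ : Function.Surjective fun k : ℕ => Q (k + 1))
    {x y : OTWFullShift A} {N : ℕ} :
    otwDist Q x y < (1 / 2) ^ N ↔
      ∀ j, 1 ≤ j → j ≤ N → (OTWPre (Q j) x ↔ OTWPre (Q j) y) := by
  by_cases hxy : x = y
  · simp [hxy, otwDist_self]
  let separating := {j : ℕ | 1 ≤ j ∧ ¬ (OTWPre (Q j) x ↔ OTWPre (Q j) y)}
  have separating_nonempty : separating.Nonempty := by
    contrapose! hxy with hempty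
    refine eq_of_forall_otwPre_iff fun w => ?_
    obtain ⟨k, rfl⟩ := hQ w
    by_contra hk
    exact hempty.subset ⟨k.succ_pos, hk⟩
  rw [otwDist_of_ne hxy, pow_lt_pow_iff_right_of_lt_one₀ (by norm_num) (by norm_num)]
  constructor
  · intro hN j hj hjN
    by_contra hsep
    exact (hN.trans_le (Nat.sInf_le ⟨hj, hsep⟩)).not_ge hjN
  · intro hagree
    obtain ⟨hpos, hsep⟩ := Nat.sInf_mem separating_nonempty
    exact not_le.1 fun hle => hsep (hagree _ hpos hle)

theorem otwDist_lt_half_pow_of_head?_ne (hQ : Function.Surjective fun k : ℕ => Q (k + 1))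
    {x y : OTWFullShift A} {N : ℕ}
    (h : ∀ k, 1 ≤ k → k ≤ N → (Q k).head? ≠ otwHead? x ∧ (Q k).head? ≠ otwHead? y) :
    otwDist Q x y < (1 / 2) ^ N :=
  (otwDist_lt_half_pow_iff hQ).2 fun k hk hkN =>
    (otwPre_iff_eq_nil_of_head?_ne (h k hk hkN).1).trans
      (otwPre_iff_eq_nil_of_head?_ne (h k hk hkN).2).symm

end Metric

theorem otw_lipschitz_shadowing_fails_general {A : Type*} {Q : ℕ → List A}
    (hQ : Function.Surjective fun k : ℕ => Q (k + 1))
    (h : ∀ n : ℕ, ∃ m, 1 ≤ m ∧ ∃ a₁ a₂ a₃ b : A, a₁ ≠ a₃ ∧ Q m = [a₁, a₂, a₃] ∧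
      ∀ k, 1 ≤ k → k ≤ m + n → (Q k).head? ≠ some a₂ ∧ (Q k).head? ≠ some b) :
    ¬ HasLipschitzShadowing (otwDist Q) otwShift (otwDomain A) := by
  refine not_hasLipschitzShadowing_of_pow_gap (r := 1 / 2) (by norm_num) (by norm_num) fun n => ?_
  obtain ⟨m, hm, a₁, a₂, a₃, b, hne, hQm, hhead⟩ := h n
  let x := otwPadded [a₁, a₂, a₃] a₃
  let bx := otwPadded [b, a₁, a₂, a₃] a₃
  have shift_bx : otwShift bx = x := rfl
  have jump_small : otwDist Q (otwShift x) bx < (1 / 2) ^ (m + n) :=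
    otwDist_lt_half_pow_of_head?_ne hQ hhead
  refine ⟨m, singleJumpOrbit otwShift x bx, ?_, fun z _ => ?_⟩
  · exact isDeltaPseudoOrbit_singleJumpOrbit otwDist_self (by positivity)
      (otwShift_iterate_inl_mem_otwDomain _ 0) (otwShift_iterate_inl_mem_otwDomain _) jump_small
  · by_contra! hz
    have close₀ : otwDist Q z x < (1 / 2) ^ m := hz 0
    have close₂ : otwDist Q (otwShift (otwShift z)) x < (1 / 2) ^ m := shift_bx ▸ hz 2
    have pre_of_close {y} (hy : otwDist Q y x < (1 / 2) ^ m) : OTWPre [a₁, a₂, a₃] y :=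
      hQm ▸ ((otwDist_lt_half_pow_iff hQ).1 hy m hm le_rfl).2 (hQm ▸ otwPre_padded _ _)
    exact hne (eq_of_otwPre_of_otwPre_shift_shift (pre_of_close close₀) (pre_of_close close₂))

/-- If the enumeration `Q` has the structure produced in Lemma 6.1 (a strictly
increasing sequence `i_1 < i_2 < ⋯` and, for each `n ≥ 1`, pairwise distinct
letters `a₁, a₂, a₃, b` with `q_{i_n - n} = a₁a₂a₃`, no word among
`q_1, …, q_{i_n}` starting with `a₂`, and `b` not occurring in any word among
`q_1, …, q_{i_n}`), then the OTW full shift does NOT have the Lipschitz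
shadowing property with respect to `d_Q`. -/
theorem otw_lipschitz_shadowing_fails {A : Type*} [Countable A] [Infinite A]
    (Q : ℕ → List A) (hQ : IsEnumeration Q) (I : ℕ → ℕ)
    (hmono : ∀ n : ℕ, 1 ≤ n → I n < I (n + 1))
    (hstruct : ∀ n : ℕ, 1 ≤ n → ∃ a₁ a₂ a₃ b : A,
      a₁ ≠ a₂ ∧ a₁ ≠ a₃ ∧ a₁ ≠ b ∧ a₂ ≠ a₃ ∧ a₂ ≠ b ∧ a₃ ≠ b ∧
      n < I n ∧ Q (I n - n) = [a₁, a₂, a₃] ∧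
      (∀ k : ℕ, 1 ≤ k → k ≤ I n → (Q k).head? ≠ some a₂) ∧
      (∀ k : ℕ, 1 ≤ k → k ≤ I n → b ∉ Q k)) :
    ¬ HasLipschitzShadowing (otwDist Q) otwShift (otwDomain A) := by
  refine otw_lipschitz_shadowing_fails_general hQ.surjective fun n => ?_
  obtain ⟨a₁, a₂, a₃, b, -, h₁₃, -, -, -, -, hI, hQI, ha₂, hb⟩ := hstruct (n + 1) n.succ_pos
  exact ⟨I (n + 1) - (n + 1), by omega, a₁, a₂, a₃, b, h₁₃, hQI, fun k hk hkI =>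
    ⟨ha₂ k hk (by omega), fun hkb => hb k hk (by omega) (List.mem_of_head? hkb)⟩⟩
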